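/- The operator A_N = K_N − M_N, where K_N is a degenerate-kernel integral operator of finite rank N and M_N is multiplication by a piecewise constant function taking N values, has spectrum consisting of at most finitely many eigenvalues outside the set {−m_1, ..., −m_N} of negatives of the multiplier values; more precisely, any element λ of the spectrum of A_N with λ ∉ {−m_1,...,−m_N} is an eigenvalue of the N×N matrix A with entries a_{ij} = α k(t_i,t_j) ∫_a^b ψ_i(x)² dx − m_i δ_{ij}. -/

import Mathlib

open MeasureTheory Set

/-!
Write `A = T ∘ P + S`, where `P` records the moments `∫ ψᵢ f`, `T` builds `K_N f` from
them, and `S` is multiplication by `-s`. Since `s = mᵢ` wherever `ψᵢ ≠ 0`, the moment map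
intertwines `S` with the diagonal matrix `D = diag (-m)`, i.e. `P ∘ S = D ∘ P`. Moreover
`∏ (S + mᵢ) = 0`, so the spectrum of `S` lies in `{-mᵢ}`. For `z` outside this set,
`z - A = (1 - T ∘ (z - D)⁻¹ ∘ P) ∘ (z - S)`, and `1 - T (z - D)⁻¹ P` is invertible as soon as
`1 - P T (z - D)⁻¹ = (z - (P T + D)) (z - D)⁻¹` is. Hence `z` lies in the spectrum of the
matrix `P T + D`. Here `P T = α G k` with `G` the matrix of pairings `∫ ψᵢ ψⱼ`, which
orthogonality makes diagonal.
-/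

section IntertwinedPerturbation

variable {R E F : Type*} [CommRing R] [AddCommGroup E] [Module R E] [AddCommGroup F] [Module R F]

lemma isUnit_one_sub_comp_swap {T : F →ₗ[R] E} {P : E →ₗ[R] F}
    (h : IsUnit (1 - P ∘ₗ T : Module.End R F)) : IsUnit (1 - T ∘ₗ P : Module.End R E) := by
  obtain ⟨V, hright, hleft⟩ := isUnit_iff_exists.mp h
  have hright' (y : F) : V y - P (T (V y)) = y := congr($hright y)
  have hleft' (y : F) : V y - V (P (T y)) = y := by
    rw [← map_sub]
    exact congr($hleft y)
  refine isUnit_iff_exists.mpr ⟨1 + T ∘ₗ V ∘ₗ P, ?_, ?_⟩ <;> ext x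
  · have : T (V (P x)) - T (P (T (V (P x)))) = T (P x) := by rw [← map_sub, hright']
    simp only [Module.End.mul_apply, LinearMap.sub_apply, LinearMap.add_apply,
      Module.End.one_apply, LinearMap.comp_apply, map_add]
    linear_combination (norm := abel) this
  · have : T (V (P x)) - T (V (P (T (P x)))) = T (P x) := by rw [← map_sub, hleft']
    simp only [Module.End.mul_apply, LinearMap.sub_apply, LinearMap.add_apply,
      Module.End.one_apply, LinearMap.comp_apply, map_sub]
    linear_combination (norm := abel) this

theorem mem_spectrum_comp_add_of_intertwine {T : F →ₗ[R] E} {P : E →ₗ[R] F}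
    {S : Module.End R E} {D : Module.End R F} (hPS : P ∘ₗ S = D ∘ₗ P) {z : R}
    (hS : z ∉ spectrum R S) (hD : z ∉ spectrum R D) (hz : z ∈ spectrum R (T ∘ₗ P + S)) :
    z ∈ spectrum R (P ∘ₗ T + D) := by
  contrapose! hz
  rw [spectrum.notMem_iff] at hS hD hz ⊢
  obtain ⟨V, hV⟩ := hD
  have hVP : V.val ∘ₗ P = P ∘ₗ (algebraMap R _ z - S) := by
    ext x
    simpa [hV] using congr($hPS x).symm
  have hfactor : algebraMap R _ z - (T ∘ₗ P + S) =
      (1 - (T ∘ₗ V⁻¹.val) ∘ₗ P) * (algebraMap R _ z - S) := by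
    have : V⁻¹.val ∘ₗ P ∘ₗ (algebraMap R _ z - S) = P := by
      rw [← hVP, ← LinearMap.comp_assoc, ← Module.End.mul_eq_comp, V.inv_mul]
      rfl
    rw [sub_mul, one_mul, Module.End.mul_eq_comp, LinearMap.comp_assoc, LinearMap.comp_assoc, this]
    abel
  have hswap : 1 - P ∘ₗ T ∘ₗ V⁻¹.val = (algebraMap R _ z - (P ∘ₗ T + D)) * V⁻¹.val := by
    rw [add_comm, ← sub_sub, ← hV, sub_mul, V.mul_inv]
    rfl
  rw [hfactor]
  refine IsUnit.mul (isUnit_one_sub_comp_swap ?_) hS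
  rw [hswap]
  exact hz.mul V⁻¹.isUnit

end IntertwinedPerturbation

open Polynomial in
lemma spectrum_subset_setOf_isRoot_of_aeval_eq_zero {K A : Type*} [Field K] [Ring A] [Algebra K A]
    {a : A} {q : K[X]} (h : aeval a q = 0) : spectrum K a ⊆ {z | q.IsRoot z} := by
  intro z hz
  have hmem : q.eval z ∈ spectrum K (aeval a q) :=
    spectrum.subset_polynomial_aeval a q (mem_image_of_mem _ hz)
  have : Nontrivial A := by
    by_contra htrivial
    rw [not_nontrivial_iff_subsingleton] at htrivial
    simp [spectrum.of_subsingleton] at hz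
  simpa [h, spectrum.zero_eq] using hmem

open Matrix in
lemma exists_mulVec_eq_smul_of_mem_spectrum {K ι : Type*} [Field K] [Fintype ι] [DecidableEq ι]
    {B : Matrix ι ι K} {z : K} (hz : z ∈ spectrum K B) :
    ∃ c : ι → K, c ≠ 0 ∧ B *ᵥ c = z • c := by
  rw [← spectrum_toLin', ← Module.End.hasEigenvalue_iff_mem_spectrum] at hz
  obtain ⟨c, hc⟩ := hz.exists_hasEigenvector
  exact ⟨c, hc.2, by simpa using hc.apply_eq_smul⟩

section MultiplicationOperator

open Polynomial
open scoped ENNReal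

variable {Ω 𝕜 : Type*} [MeasurableSpace Ω] {μ : Measure Ω} [NormedField 𝕜] {p : ℝ≥0∞}
  {S : Module.End 𝕜 (Lp 𝕜 p μ)} {w : Ω → 𝕜}

lemma aeval_mulOperator_ae_eq (hS : ∀ f, S f =ᵐ[μ] fun x => w x * f x) (q : 𝕜[X])
    (f : Lp 𝕜 p μ) : aeval S q f =ᵐ[μ] fun x => q.eval (w x) * f x := by
  induction q using Polynomial.induction_on generalizing f with
  | C c =>
    filter_upwards [Lp.coeFn_smul c f] with x hx
    simpa using hx
  | add q r hq hr =>
    filter_upwards [hq f, hr f, Lp.coeFn_add (aeval S q f) (aeval S r f)] with x hqx hrx hadd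
    simp only [map_add, LinearMap.add_apply, eval_add, add_mul]
    rw [hadd, Pi.add_apply, hqx, hrx]
  | monomial n c ih =>
    filter_upwards [ih (S f), hS f] with x hx hSx
    rw [pow_succ, ← mul_assoc, map_mul, aeval_X, Module.End.mul_apply, hx, hSx, eval_mul_X,
      mul_assoc]

theorem spectrum_mulOperator_subset (hS : ∀ f, S f =ᵐ[μ] fun x => w x * f x) {t : Finset 𝕜}
    (hw : ∀ᵐ x ∂μ, w x ∈ t) : spectrum 𝕜 S ⊆ t := by
  have hroot (z : 𝕜) : (∏ c ∈ t, (X - C c)).IsRoot z ↔ z ∈ t := by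
    simp [IsRoot, eval_prod, Finset.prod_eq_zero_iff, sub_eq_zero]
  have hannihilate : aeval S (∏ c ∈ t, (X - C c)) = 0 := by
    ext1 f
    refine Lp.ext ?_
    filter_upwards [aeval_mulOperator_ae_eq hS (∏ c ∈ t, (X - C c)) f, hw,
      Lp.coeFn_zero 𝕜 p μ] with x hx hwx hzero
    rw [hx, (hroot _).mpr hwx, zero_mul, LinearMap.zero_apply, hzero, Pi.zero_apply]
  exact fun z hz => (hroot z).mp (spectrum_subset_setOf_isRoot_of_aeval_eq_zero hannihilate hz)

end MultiplicationOperator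

section DegenerateKernel

open Matrix
open scoped ENNReal

variable {Ω 𝕜 ι : Type*} [MeasurableSpace Ω] {μ : Measure Ω} [RCLike 𝕜] {p q : ℝ≥0∞}
  {φ ψ : ι → Ω → 𝕜}

/-- The matrix of pairings `∫ ψᵢ φⱼ`, bilinear rather than sesquilinear: it represents taking the
moments against `ψ` of linear combinations of `φ`. -/
noncomputable def pairingMatrix (μ : Measure Ω) (ψ φ : ι → Ω → 𝕜) : Matrix ι ι 𝕜 :=
  Matrix.of fun i j => ∫ x, ψ i x * φ j x ∂μ

lemma pairingMatrix_eq_diagonal [DecidableEq ι]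
    (horth : ∀ i j, i ≠ j → ∫ x, ψ i x * φ j x ∂μ = 0) :
    pairingMatrix μ ψ φ = diagonal fun i => ∫ x, ψ i x * φ i x ∂μ := by
  ext i j
  obtain rfl | hij := eq_or_ne i j
  · simp [pairingMatrix]
  · simp [pairingMatrix, hij, horth i j hij]

lemma smul_pairingMatrix_mul_sub_diagonal_of_orthogonal [Fintype ι] [DecidableEq ι]
    (horth : ∀ i j, i ≠ j → ∫ x, ψ i x * ψ j x ∂μ = 0) (α : 𝕜) (κ : Matrix ι ι 𝕜) (m : ι → 𝕜) :
    α • (pairingMatrix μ ψ ψ * κ) - diagonal m = Matrix.of fun i j =>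
      α * κ i j * (∫ x, (ψ i x) ^ 2 ∂μ) - if i = j then m i else 0 := by
  ext i j
  simp only [pairingMatrix_eq_diagonal horth, Matrix.sub_apply, Matrix.smul_apply, diagonal_mul,
    smul_eq_mul, diagonal_apply, of_apply, pow_two]
  ring

section Moments

variable [Fact (1 ≤ p)] [Fact (1 ≤ q)] [q.HolderConjugate p]

/-- The linear map sending `f ∈ L^p` to the vector of its moments `∫ ψᵢ f`, for `ψᵢ` in the dual
space `L^q`. -/
noncomputable def momentMap (hψ : ∀ i, MemLp (ψ i) q μ) : Lp 𝕜 p μ →ₗ[𝕜] ι → 𝕜 :=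
  LinearMap.pi fun i =>
    ((ContinuousLinearMap.mul 𝕜 𝕜).lpPairing μ q p ((hψ i).toLp (ψ i))).toLinearMap

lemma momentMap_apply (hψ : ∀ i, MemLp (ψ i) q μ) (f : Lp 𝕜 p μ) (i : ι) :
    momentMap hψ f i = ∫ x, ψ i x * f x ∂μ := by
  simp only [momentMap, LinearMap.pi_apply, ContinuousLinearMap.coe_coe,
    ContinuousLinearMap.lpPairing_eq_integral, ContinuousLinearMap.mul_apply']
  refine integral_congr_ae ?_
  filter_upwards [(hψ i).coeFn_toLp] with x hx
  rw [hx]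

variable [Fintype ι]

lemma momentMap_comp_mulOperator [DecidableEq ι] (hψ : ∀ i, MemLp (ψ i) q μ)
    {S : Module.End 𝕜 (Lp 𝕜 p μ)} {w : Ω → 𝕜} {d : ι → 𝕜}
    (hS : ∀ f, S f =ᵐ[μ] fun x => w x * f x) (hwψ : ∀ i, ∀ᵐ x ∂μ, ψ i x ≠ 0 → w x = d i) :
    momentMap hψ ∘ₗ S = (diagonal d).toLin' ∘ₗ momentMap hψ := by
  ext f i
  simp only [LinearMap.comp_apply, toLin'_apply, mulVec_diagonal, momentMap_apply,
    ← integral_const_mul]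
  refine integral_congr_ae ?_
  filter_upwards [hS f, hwψ i] with x hSx hwx
  rw [hSx]
  obtain hzero | hne := eq_or_ne (ψ i x) 0
  · simp [hzero]
  · rw [hwx hne]
    ring

end Moments

variable [Fintype ι]

lemma coeFn_linearCombination_toLp (hφ : ∀ i, MemLp (φ i) p μ) (c : ι → 𝕜) :
    Fintype.linearCombination 𝕜 (fun i => (hφ i).toLp (φ i)) c =ᵐ[μ]
      fun x => ∑ i, c i * φ i x := by
  rw [Fintype.linearCombination_apply]
  have hterm : ∀ᵐ x ∂μ, ∀ i, (c i • (hφ i).toLp (φ i)) x = c i * φ i x := by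
    refine ae_all_iff.mpr fun i => ?_
    filter_upwards [Lp.coeFn_smul (c i) ((hφ i).toLp (φ i)), (hφ i).coeFn_toLp] with x hsmul hx
    rw [hsmul, Pi.smul_apply, hx, smul_eq_mul]
  filter_upwards [Lp.coeFn_finsetSum Finset.univ fun i => c i • (hφ i).toLp (φ i), hterm]
    with x hsum hx
  simp only [hsum, Finset.sum_apply, hx]

variable [Fact (1 ≤ p)] [Fact (1 ≤ q)] [q.HolderConjugate p]

lemma momentMap_comp_linearCombination [DecidableEq ι] (hφ : ∀ i, MemLp (φ i) p μ)
    (hψ : ∀ i, MemLp (ψ i) q μ) :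
    momentMap hψ ∘ₗ Fintype.linearCombination 𝕜 (fun i => (hφ i).toLp (φ i)) =
      (pairingMatrix μ ψ φ).toLin' := by
  ext j i
  simp only [LinearMap.comp_apply, LinearMap.single_apply, Fintype.linearCombination_apply_single,
    one_smul, momentMap_apply, toLin'_apply, mulVec_single_one, pairingMatrix, col_apply, of_apply]
  refine integral_congr_ae ?_
  filter_upwards [(hφ j).coeFn_toLp] with x hx
  rw [hx]

lemma integral_degenerateKernel_mul (hψ : ∀ i, MemLp (ψ i) q μ) (κ : Matrix ι ι 𝕜)
    (f : Lp 𝕜 p μ) (x : Ω) :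
    ∫ u, (∑ i, ∑ j, κ i j * φ i x * ψ j u) * f u ∂μ =
      ∑ i, (κ *ᵥ momentMap hψ f) i * φ i x := by
  have hint (j : ι) : Integrable (fun u => ψ j u * f u) μ := (hψ j).integrable_mul (Lp.memLp f)
  calc ∫ u, (∑ i, ∑ j, κ i j * φ i x * ψ j u) * f u ∂μ
      = ∫ u, ∑ i, ∑ j, κ i j * φ i x * (ψ j u * f u) ∂μ := by
        simp only [Finset.sum_mul, mul_assoc]
    _ = ∑ i, ∑ j, κ i j * φ i x * ∫ u, ψ j u * f u ∂μ := by
        rw [integral_finsetSum _ fun i _ => integrable_finsetSum _ fun j _ => (hint j).const_mul _]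
        refine Finset.sum_congr rfl fun i _ => ?_
        rw [integral_finsetSum _ fun j _ => (hint j).const_mul _]
        simp only [integral_const_mul]
    _ = ∑ i, (κ *ᵥ momentMap hψ f) i * φ i x := by
        simp only [mulVec, dotProduct, momentMap_apply, Finset.sum_mul, mul_right_comm]

/-- The integral operator on `L^p` with kernel `∑ᵢⱼ κᵢⱼ φᵢ(x) ψⱼ(u)`, encoded through its
factorization over `ι → 𝕜`: moments against `ψ`, then `κ`, then linear combination of `φ`. -/
noncomputable def degenerateOperator [DecidableEq ι] (hφ : ∀ i, MemLp (φ i) p μ)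
    (hψ : ∀ i, MemLp (ψ i) q μ) (κ : Matrix ι ι 𝕜) : Module.End 𝕜 (Lp 𝕜 p μ) :=
  (Fintype.linearCombination 𝕜 (fun i => (hφ i).toLp (φ i)) ∘ₗ κ.toLin') ∘ₗ momentMap hψ

variable [DecidableEq ι]

lemma degenerateOperator_ae_eq (hφ : ∀ i, MemLp (φ i) p μ) (hψ : ∀ i, MemLp (ψ i) q μ)
    (κ : Matrix ι ι 𝕜) (f : Lp 𝕜 p μ) :
    degenerateOperator hφ hψ κ f =ᵐ[μ]
      fun x => ∫ u, (∑ i, ∑ j, κ i j * φ i x * ψ j u) * f u ∂μ := by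
  simp only [integral_degenerateKernel_mul hψ]
  exact coeFn_linearCombination_toLp hφ _

theorem mem_spectrum_pairingMatrix_mul_add_diagonal (hφ : ∀ i, MemLp (φ i) p μ)
    (hψ : ∀ i, MemLp (ψ i) q μ) (κ : Matrix ι ι 𝕜) {S : Module.End 𝕜 (Lp 𝕜 p μ)} {w : Ω → 𝕜}
    {d : ι → 𝕜} (hS : ∀ f, S f =ᵐ[μ] fun x => w x * f x)
    (hwψ : ∀ i, ∀ᵐ x ∂μ, ψ i x ≠ 0 → w x = d i) (hw : ∀ᵐ x ∂μ, w x ∈ range d) {z : 𝕜}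
    (hz : z ∈ spectrum 𝕜 (degenerateOperator hφ hψ κ + S)) (hzd : z ∉ range d) :
    z ∈ spectrum 𝕜 (pairingMatrix μ ψ φ * κ + diagonal d) := by
  have hzS : z ∉ spectrum 𝕜 S := fun hzS => hzd <| by
    simpa using spectrum_mulOperator_subset hS (t := Finset.univ.image d) (by simpa using hw) hzS
  have hzD : z ∉ spectrum 𝕜 (diagonal d).toLin' := by rwa [spectrum_toLin', spectrum_diagonal]
  rw [← spectrum_toLin', map_add, toLin'_mul, ← momentMap_comp_linearCombination hφ hψ,
    LinearMap.comp_assoc]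
  exact mem_spectrum_comp_add_of_intertwine (momentMap_comp_mulOperator hψ hS hwψ) hzS hzD hz

theorem spectrum_of_degenerate_operator_general (hφ : ∀ i, MemLp (φ i) p μ)
    (hψ : ∀ i, MemLp (ψ i) q μ) (α : 𝕜) (κ : Matrix ι ι 𝕜) {m : ι → 𝕜} {s : Ω → 𝕜}
    (hsψ : ∀ i, ∀ᵐ x ∂μ, ψ i x ≠ 0 → s x = m i) (hs : ∀ᵐ x ∂μ, ∃ i, s x = m i)
    {A : Lp 𝕜 p μ →L[𝕜] Lp 𝕜 p μ}
    (hA : ∀ f, A f =ᵐ[μ] fun x =>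
      α * (∫ u, (∑ i, ∑ j, κ i j * φ i x * ψ j u) * f u ∂μ) - s x * f x)
    {z : 𝕜} (hz : z ∈ spectrum 𝕜 A) (hzm : ∀ i, z ≠ -m i) :
    ∃ c : ι → 𝕜, c ≠ 0 ∧ (α • (pairingMatrix μ ψ φ * κ) - diagonal m) *ᵥ c = z • c := by
  let K := degenerateOperator hφ hψ (α • κ)
  have hS (f : Lp 𝕜 p μ) : ((A : Module.End 𝕜 (Lp 𝕜 p μ)) - K) f =ᵐ[μ] fun x => -s x * f x := by
    filter_upwards [hA f, degenerateOperator_ae_eq hφ hψ (α • κ) f, Lp.coeFn_sub (A f) (K f)]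
      with x hAx hKx hsub
    simp only [integral_degenerateKernel_mul hψ] at hAx hKx
    simp only [smul_mulVec, Pi.smul_apply, smul_eq_mul, mul_assoc, ← Finset.mul_sum] at hKx
    rw [LinearMap.sub_apply, ContinuousLinearMap.coe_coe, hsub, Pi.sub_apply, hAx, hKx]
    ring
  rw [ContinuousLinearMap.spectrum_eq, ← add_sub_cancel K (A : Module.End 𝕜 (Lp 𝕜 p μ))] at hz
  have hmatrix := mem_spectrum_pairingMatrix_mul_add_diagonal hφ hψ (α • κ) hS (d := fun i => -m i)
    (fun i => (hsψ i).mono fun x hx hne => congr(-$(hx hne)))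
    (hs.mono fun x ⟨i, hi⟩ => ⟨i, congr(-$hi.symm)⟩) hz fun ⟨i, hi⟩ => hzm i hi.symm
  rw [Matrix.mul_smul, ← diagonal_neg, ← sub_eq_add_neg] at hmatrix
  exact exists_mulVec_eq_smul_of_mem_spectrum hmatrix

end DegenerateKernel

/-- Any point `λ` of the spectrum of `A_N = K_N − M_N` (degenerate-kernel integral
operator minus multiplication by a piecewise constant function with values `m_i`)
with `λ ∉ {−m_1,…,−m_N}` is an eigenvalue of the `N×N` matrix `A` with entries
`a_{ij} = α k(t_i,t_j) ∫ ψ_i² − m_i δ_{ij}`. -/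
theorem spectrum_of_degenerate_operator (a b : ℝ) (hab : a < b) (N : ℕ) (α : ℝ)
    (ψ : Fin N → ℝ → ℂ) (hψmeas : ∀ i, Measurable (ψ i))
    (hψbd : ∀ i, ∃ B : ℝ, ∀ y, ‖ψ i y‖ ≤ B)
    (horth : ∀ i p : Fin N, i ≠ p → ∫ y in Icc a b, ψ i y * ψ p y = 0)
    (t : Fin N → ℝ) (k : ℝ → ℝ → ℂ) (m : Fin N → ℝ) (s : ℝ → ℝ)
    (hs_supp : ∀ (i : Fin N) (y : ℝ), ψ i y ≠ 0 → s y = m i)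
    (hs_range : ∀ y ∈ Icc a b, ∃ i, s y = m i)
    (AN : Lp ℂ ⊤ (volume.restrict (Icc a b)) →L[ℂ] Lp ℂ ⊤ (volume.restrict (Icc a b)))
    (hAN : ∀ f : Lp ℂ ⊤ (volume.restrict (Icc a b)),
      ⇑(AN f) =ᵐ[volume.restrict (Icc a b)] fun y =>
        (α : ℂ) * (∫ u in Icc a b,
          (∑ i : Fin N, ∑ j : Fin N, k (t i) (t j) * ψ i y * ψ j u) * f u)
        - (s y : ℂ) * f y)
    (lam : ℂ) (hlam : lam ∈ spectrum ℂ AN) (hne : ∀ i : Fin N, lam ≠ -(m i : ℂ)) :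
    ∃ c : Fin N → ℂ, c ≠ 0 ∧
      (Matrix.of fun i j : Fin N =>
        (α : ℂ) * k (t i) (t j) * (∫ y in Icc a b, (ψ i y) ^ 2)
          - if i = j then (m i : ℂ) else 0).mulVec c = lam • c := by
  have hψ (r : ENNReal) (i : Fin N) : MemLp (ψ i) r (volume.restrict (Icc a b)) :=
    let ⟨B, hB⟩ := hψbd i
    .of_bound (hψmeas i).aestronglyMeasurable B (.of_forall hB)
  rw [← smul_pairingMatrix_mul_sub_diagonal_of_orthogonal horth α (fun i j => k (t i) (t j)) _]
  exact spectrum_of_degenerate_operator_general (m := fun i => (m i : ℂ)) (s := fun y => (s y : ℂ))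
    (hψ ⊤) (hψ 1) α (fun i j => k (t i) (t j))
    (fun i => .of_forall fun y hy => congrArg _ (hs_supp i y hy))
    ((ae_restrict_mem measurableSet_Icc).mono fun y hy => (hs_range y hy).imp fun i => congrArg _)
    hAN hlam hne
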